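/- Let (Ω, 𝓕, μ) be a probability space, X, Y : Ω → ℝ and Z : Ω → ℝ^d Borel measurable, with conditional distribution functions F_{X|Z}(t|z) = (condDistrib X Z μ) z ((−∞, t]) and F_{Y|Z}(t|z) = (condDistrib Y Z μ) z ((−∞, t]). Assume that for (law of Z)-almost every z, the maps t ↦ F_{X|Z}(t|z) and t ↦ F_{Y|Z}(t|z) are continuous and strictly increasing (so that X is almost surely recovered from (U₁, Z) by the conditional quantile transform, and likewise Y from (U₂, Z)). Define U₁(ω) = F_{X|Z}(X(ω)|Z(ω)) and U₂(ω) = F_{Y|Z}(Y(ω)|Z(ω)). If the pair (U₁, U₂) is independent of Z, then X and Y are conditionally independent given Z if and only if U₁ and U₂ are independent. -/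

import Mathlib

open MeasureTheory ProbabilityTheory

section FiberwiseMap

variable {α β β' γ γ' : Type*} {mα : MeasurableSpace α} {mβ : MeasurableSpace β}
  {mβ' : MeasurableSpace β'} {mγ : MeasurableSpace γ} {mγ' : MeasurableSpace γ'}

/-- The image of `κ a` under `F (a, ·)`. -/
lemma ProbabilityTheory.Kernel.id_prod_map_apply (κ : Kernel α β) [IsSFiniteKernel κ]
    {F : α × β → γ} (hF : Measurable F) (a : α) :
    (Kernel.id ×ₖ κ).map F a = (κ a).map (fun b => F (a, b)) := by
  rw [Kernel.map_apply _ hF, Kernel.prod_apply, Kernel.id_apply, Measure.dirac_prod,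
    Measure.map_map hF measurable_prodMk_left]
  rfl

lemma MeasureTheory.Measure.map_compProd_fiberwise (ν : Measure α) [SFinite ν]
    (κ : Kernel α β) [IsSFiniteKernel κ] {F : α × β → γ} (hF : Measurable F) :
    (ν ⊗ₘ κ).map (fun p => (p.1, F p)) = ν ⊗ₘ (Kernel.id ×ₖ κ).map F := by
  ext s hs
  have hΦ : Measurable (fun p : α × β => (p.1, F p)) := measurable_fst.prodMk hF
  rw [Measure.map_apply hΦ hs, Measure.compProd_apply (hΦ hs), Measure.compProd_apply hs]
  refine lintegral_congr fun a => ?_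
  rw [Kernel.id_prod_map_apply κ hF, Measure.map_apply (by fun_prop) (measurable_prodMk_left hs)]
  rfl

lemma MeasureTheory.Measure.map_compProd_prod_fiberwise (ν : Measure α) [SFinite ν]
    (κ : Kernel α β) [IsFiniteKernel κ] (η : Kernel α β') [IsFiniteKernel η]
    {F : α × β → γ} (hF : Measurable F) {G : α × β' → γ'} (hG : Measurable G) :
    (ν ⊗ₘ (κ ×ₖ η)).map (fun p => (p.1, F (p.1, p.2.1), G (p.1, p.2.2))) =
      ν ⊗ₘ ((Kernel.id ×ₖ κ).map F ×ₖ (Kernel.id ×ₖ η).map G) := by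
  have hH : Measurable (fun p : α × β × β' => (F (p.1, p.2.1), G (p.1, p.2.2))) := by fun_prop
  rw [Measure.map_compProd_fiberwise ν (κ ×ₖ η) hH]
  congr 1
  ext1 a
  rw [Kernel.id_prod_map_apply _ hH, Kernel.prod_apply, Kernel.prod_apply,
    Kernel.id_prod_map_apply κ hF, Kernel.id_prod_map_apply η hG,
    Measure.map_prod_map _ _ (by fun_prop) (by fun_prop)]
  rfl

end FiberwiseMap

section CondDistrib

variable {Ω α β γ : Type*} {mΩ : MeasurableSpace Ω} {mα : MeasurableSpace α}
  {mβ : MeasurableSpace β} [StandardBorelSpace β] [Nonempty β]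
  {mγ : MeasurableSpace γ} [StandardBorelSpace γ] [Nonempty γ]
  {μ : Measure Ω} {Z : Ω → α}

lemma ProbabilityTheory.condDistrib_fiberwise [IsFiniteMeasure μ] {X : Ω → β}
    (hX : Measurable X) (hZ : Measurable Z) {F : α × β → γ} (hF : Measurable F) :
    condDistrib (fun ω => F (Z ω, X ω)) Z μ =ᵐ[μ.map Z]
      (Kernel.id ×ₖ condDistrib X Z μ).map F := by
  refine condDistrib_ae_eq_of_measure_eq_compProd Z (by fun_prop) ?_
  rw [← Measure.map_compProd_fiberwise _ _ hF, compProd_map_condDistrib hX.aemeasurable,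
    Measure.map_map (by fun_prop) (by fun_prop)]
  rfl

lemma ProbabilityTheory.IndepFun.condDistrib_ae_eq_const [IsProbabilityMeasure μ] {U : Ω → γ}
    (hU : Measurable U) (hZ : Measurable Z) (h : IndepFun U Z μ) :
    condDistrib U Z μ =ᵐ[μ.map Z] Kernel.const α (μ.map U) := by
  have := Measure.isProbabilityMeasure_map (μ := μ) hU.aemeasurable
  refine condDistrib_ae_eq_of_measure_eq_compProd Z hU.aemeasurable ?_
  rw [Measure.compProd_const]
  exact (indepFun_iff_map_prod_eq_prod_map_map hZ.aemeasurable hU.aemeasurable).1 h.symm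

end CondDistrib

section CondIndep

variable {Ω α β β' γ γ' : Type*} {mΩ : MeasurableSpace Ω} [StandardBorelSpace Ω]
  {mα : MeasurableSpace α}
  {mβ : MeasurableSpace β} [StandardBorelSpace β] [Nonempty β]
  {mβ' : MeasurableSpace β'} [StandardBorelSpace β'] [Nonempty β']
  {mγ : MeasurableSpace γ} [StandardBorelSpace γ] [Nonempty γ]
  {mγ' : MeasurableSpace γ'} [StandardBorelSpace γ'] [Nonempty γ']
  {μ : Measure Ω} {Z : Ω → α}

lemma ProbabilityTheory.condIndepFun_iff_map_eq_compProd [IsFiniteMeasure μ]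
    {U : Ω → γ} {V : Ω → γ'} (hU : Measurable U) (hV : Measurable V) (hZ : Measurable Z) :
    CondIndepFun (mα.comap Z) hZ.comap_le U V μ ↔
      μ.map (fun ω => (Z ω, U ω, V ω)) =
        μ.map Z ⊗ₘ (condDistrib U Z μ ×ₖ condDistrib V Z μ) := by
  rw [condIndepFun_iff_map_prod_eq_prod_condDistrib_prod_condDistrib hU hV hZ,
    Measure.compProd_eq_comp_prod]

/-- Conditional independence given `Z` is invariant under injective maps depending on `Z`. -/
lemma ProbabilityTheory.condIndepFun_fiberwise_iff [StandardBorelSpace α] [IsFiniteMeasure μ]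
    {X : Ω → β} {Y : Ω → β'} (hX : Measurable X) (hY : Measurable Y) (hZ : Measurable Z)
    {F : α × β → γ} (hF : Measurable F) (hF_inj : ∀ a, Function.Injective fun b => F (a, b))
    {G : α × β' → γ'} (hG : Measurable G) (hG_inj : ∀ a, Function.Injective fun b => G (a, b)) :
    CondIndepFun (mα.comap Z) hZ.comap_le X Y μ ↔
      CondIndepFun (mα.comap Z) hZ.comap_le
        (fun ω => F (Z ω, X ω)) (fun ω => G (Z ω, Y ω)) μ := by
  have hΦ : MeasurableEmbedding
      (fun p : α × β × β' => (p.1, F (p.1, p.2.1), G (p.1, p.2.2))) := by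
    refine Measurable.measurableEmbedding (by fun_prop) ?_
    rintro ⟨z, x, y⟩ ⟨z', x', y'⟩ h
    simp only [Prod.mk.injEq] at h
    obtain ⟨rfl, hx, hy⟩ := h
    rw [hF_inj z hx, hG_inj z hy]
  have h_prod : (condDistrib (fun ω => F (Z ω, X ω)) Z μ ×ₖ
      condDistrib (fun ω => G (Z ω, Y ω)) Z μ) =ᵐ[μ.map Z]
      ((Kernel.id ×ₖ condDistrib X Z μ).map F ×ₖ (Kernel.id ×ₖ condDistrib Y Z μ).map G) := by
    filter_upwards [condDistrib_fiberwise hX hZ hF, condDistrib_fiberwise hY hZ hG] with z hx hy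
    rw [Kernel.prod_apply, Kernel.prod_apply, hx, hy]
  rw [condIndepFun_iff_map_eq_compProd hX hY hZ,
    condIndepFun_iff_map_eq_compProd (by fun_prop) (by fun_prop) hZ,
    Measure.compProd_congr h_prod, ← Measure.map_compProd_prod_fiberwise _ _ _ hF hG,
    ← hΦ.map_injective.eq_iff, Measure.map_map hΦ.measurable (by fun_prop)]
  rfl

lemma ProbabilityTheory.IndepFun.condIndepFun_iff_indepFun [IsProbabilityMeasure μ]
    {U : Ω → γ} {V : Ω → γ'} (hU : Measurable U) (hV : Measurable V) (hZ : Measurable Z)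
    (h : IndepFun (fun ω => (U ω, V ω)) Z μ) :
    CondIndepFun (mα.comap Z) hZ.comap_le U V μ ↔ IndepFun U V μ := by
  have := Measure.isProbabilityMeasure_map (μ := μ) hU.aemeasurable
  have := Measure.isProbabilityMeasure_map (μ := μ) hV.aemeasurable
  have := Measure.isProbabilityMeasure_map (μ := μ) hZ.aemeasurable
  have h_prod : (condDistrib U Z μ ×ₖ condDistrib V Z μ) =ᵐ[μ.map Z]
      Kernel.const α ((μ.map U).prod (μ.map V)) := by
    have hUZ : IndepFun U Z μ := h.comp measurable_fst measurable_id
    have hVZ : IndepFun V Z μ := h.comp measurable_snd measurable_id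
    filter_upwards [hUZ.condDistrib_ae_eq_const hU hZ, hVZ.condDistrib_ae_eq_const hV hZ]
      with z hu hv
    rw [Kernel.prod_apply, hu, hv]
    rfl
  rw [condIndepFun_iff_map_eq_compProd hU hV hZ, Measure.compProd_congr h_prod,
    Measure.compProd_const, indepFun_iff_map_prod_eq_prod_map_map hU.aemeasurable hV.aemeasurable,
    (indepFun_iff_map_prod_eq_prod_map_map hZ.aemeasurable (hU.prodMk hV).aemeasurable).1 h.symm]
  refine ⟨fun h_eq => ?_, fun h_eq => by rw [h_eq]⟩
  simpa using congrArg Measure.snd h_eq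

end CondIndep

lemma ProbabilityTheory.Kernel.measurable_apply_Iic_toReal {α : Type*} {mα : MeasurableSpace α}
    (κ : Kernel α ℝ) [IsSFiniteKernel κ] :
    Measurable (fun p : α × ℝ => (κ p.1 (Set.Iic p.2)).toReal) := by
  have hs : MeasurableSet {q : (α × ℝ) × ℝ | q.2 ≤ q.1.2} :=
    measurableSet_le (by fun_prop) (by fun_prop)
  exact (Kernel.measurable_kernel_prodMk_left
    (κ := κ.comap Prod.fst measurable_fst) hs).ennreal_toReal

/-- A measurable function that is injective on almost every fiber agrees, on almost every fiber,
with a measurable function that is injective on every fiber. -/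
lemma MeasureTheory.exists_measurable_forall_injective_of_ae {α β : Type*}
    {mα : MeasurableSpace α} {mβ : MeasurableSpace β} {ν : Measure α} {F : α × β → β}
    (hF : Measurable F) (h : ∀ᵐ a ∂ν, Function.Injective fun b => F (a, b)) :
    ∃ F' : α × β → β, Measurable F' ∧ (∀ a, Function.Injective fun b => F' (a, b)) ∧
      ∀ᵐ a ∂ν, ∀ b, F' (a, b) = F (a, b) := by
  classical
  let N := toMeasurable ν {a | ¬ Function.Injective fun b => F (a, b)}
  have hN : MeasurableSet N := measurableSet_toMeasurable _ _
  have hN_null : ν N = 0 := (measure_toMeasurable _).trans h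
  refine ⟨fun p => if p.1 ∈ N then p.2 else F p,
    Measurable.ite (measurable_fst hN) measurable_snd hF, fun a => ?_, ?_⟩
  · by_cases ha : a ∈ N
    · simpa only [ha, if_true] using! Function.injective_id
    · simpa only [ha, if_false] using not_not.1 fun h' => ha (subset_toMeasurable _ _ h')
  · filter_upwards [measure_eq_zero_iff_ae_notMem.1 hN_null] with a ha b
    exact if_neg ha

/-- assume that for `(μ.map Z)`-a.e. `z` the conditional distribution
functions `t ↦ F_{X|Z}(t|z)` and `t ↦ F_{Y|Z}(t|z)` are continuous and strictly
increasing, and that the pair of nonparametric residuals `(U₁, U₂)` is independent of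
`Z`.  Then `X` and `Y` are conditionally independent given `Z` if and only if `U₁`
and `U₂` are independent. -/
theorem condIndep_iff_residuals_indep {Ω : Type*} [MeasurableSpace Ω]
    [StandardBorelSpace Ω] [Nonempty Ω]
    (μ : Measure Ω) [IsProbabilityMeasure μ] {d : ℕ}
    (X Y : Ω → ℝ) (Z : Ω → Fin d → ℝ)
    (hX : Measurable X) (hY : Measurable Y) (hZ : Measurable Z)
    (hFX : ∀ᵐ z ∂(μ.map Z),
      Continuous (fun t : ℝ => ((condDistrib X Z μ) z (Set.Iic t)).toReal) ∧
      StrictMono (fun t : ℝ => ((condDistrib X Z μ) z (Set.Iic t)).toReal))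
    (hFY : ∀ᵐ z ∂(μ.map Z),
      Continuous (fun t : ℝ => ((condDistrib Y Z μ) z (Set.Iic t)).toReal) ∧
      StrictMono (fun t : ℝ => ((condDistrib Y Z μ) z (Set.Iic t)).toReal))
    (hUZ : IndepFun
      (fun ω => (((condDistrib X Z μ) (Z ω) (Set.Iic (X ω))).toReal,
                 ((condDistrib Y Z μ) (Z ω) (Set.Iic (Y ω))).toReal)) Z μ) :
    CondIndepFun (MeasurableSpace.comap Z inferInstance) hZ.comap_le X Y μ ↔
      IndepFun (fun ω => ((condDistrib X Z μ) (Z ω) (Set.Iic (X ω))).toReal)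
        (fun ω => ((condDistrib Y Z μ) (Z ω) (Set.Iic (Y ω))).toReal) μ := by
  have hUmeas := Kernel.measurable_apply_Iic_toReal (condDistrib X Z μ)
  have hVmeas := Kernel.measurable_apply_Iic_toReal (condDistrib Y Z μ)
  obtain ⟨F, hF, hF_inj, hF_eq⟩ := exists_measurable_forall_injective_of_ae hUmeas
    (hFX.mono fun _ h => h.2.injective)
  obtain ⟨G, hG, hG_inj, hG_eq⟩ := exists_measurable_forall_injective_of_ae hVmeas
    (hFY.mono fun _ h => h.2.injective)
  have hU : (fun ω => ((condDistrib X Z μ) (Z ω) (Set.Iic (X ω))).toReal) =ᵐ[μ]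
      fun ω => F (Z ω, X ω) :=
    (ae_of_ae_map hZ.aemeasurable hF_eq).mono fun ω h => (h (X ω)).symm
  have hV : (fun ω => ((condDistrib Y Z μ) (Z ω) (Set.Iic (Y ω))).toReal) =ᵐ[μ]
      fun ω => G (Z ω, Y ω) :=
    (ae_of_ae_map hZ.aemeasurable hG_eq).mono fun ω h => (h (Y ω)).symm
  rw [condIndepFun_fiberwise_iff hX hY hZ hF hF_inj hG hG_inj]
  refine Iff.trans ?_ ⟨fun h => h.congr hU.symm hV.symm, fun h => h.congr hU hV⟩
  exact (hUZ.congr (hU.prodMk hV) .rfl).condIndepFun_iff_indepFun (by fun_prop) (by fun_prop) hZ
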